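/- arXiv:2406.08240 — 2 statements merged into one kernel-verified Lean document; each statement's English description precedes it below -/
import Mathlib

section
/- Let B and C be monoids such that C is right cancellative (for all a, b, c ∈ C, a·c = b·c implies a = b). Let f : B → C be a monoid homomorphism and t : B → C a function such that the pointwise product t·f is a monoid homomorphism. Then for all x, y ∈ B one has t(x·y)·f(x) = t(x)·f(x)·t(y). Consequently every horizontally composable pair of 2-cells with codomain a right-cancellative monoid satisfies the middle-interchange (naturality) condition. -/
section MulHomClass

variable {B C F : Type*} [Mul B] [Semigroup C] [FunLike F B C] [MulHomClass F B C]
  {f g : F} {t : B → C}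

theorem natural_mul_map_right (hg : ∀ x, g x = t x * f x) (x y : B) :
    t (x * y) * f x * f y = t x * f x * t y * f y :=
  calc
    t (x * y) * f x * f y = t (x * y) * f (x * y) := by rw [map_mul, mul_assoc]
    _ = g (x * y) := (hg (x * y)).symm
    _ = g x * g y := map_mul g x y
    _ = t x * f x * t y * f y := by rw [hg, hg, ← mul_assoc]

theorem natural_of_rightCancel_general (hg : ∀ x, g x = t x * f x) (x : B) {y : B}
    (hy : IsRightRegular (f y)) : t (x * y) * f x = t x * f x * t y :=
  hy (natural_mul_map_right hg x y)

end MulHomClass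

/-- If `C` is a right-cancellative monoid, `f : B → C` is a monoid homomorphism
and `t : B → C` is a function such that the pointwise product `t·f` is a monoid
homomorphism, then `t (x*y) * f x = t x * f x * t y` for all `x y : B`; hence
every horizontally composable pair of 2-cells with codomain a right-cancellative
monoid satisfies the middle-interchange (naturality) condition. -/
theorem natural_of_rightCancel {B C : Type*} [Monoid B] [Monoid C]
    (hC : ∀ a b c : C, a * c = b * c → a = b)
    (f : B →* C) (t : B → C) (g : B →* C) (hg : ∀ x, g x = t x * f x) :
    ∀ x y : B, t (x * y) * f x = t x * f x * t y :=
  fun x y ↦ natural_of_rightCancel_general hg x fun a b h ↦ hC a b (f y) h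
end

section
/- Let M be a monoid (multiplicative, with unit 1) and let a 2-cell structure over M be given by: a type H, maps d, c : H → M, maps z, z₋, z⁺ : M → H, and a vertical addition add : H → H → H, satisfying: d(z f) = f = c(z f); whenever d x = c y, d(add x y) = d y and c(add x y) = c x; add (z (c x)) x = x = add x (z (d x)); add is associative on composable triples; d(z⁺ f) = f, c(z⁺ f) = 1, d(z₋ f) = 1, c(z₋ f) = f, and z f = add (z₋ f) (z⁺ f) for all f ∈ M (splitting of identities). Let A = { a ∈ H | d a = 1 and c a = 1 } with inclusion k : A → H, and suppose q : H → A satisfies: q(k a) = a for all a ∈ A; add (z₋ (c x)) (add (k (q x)) (z⁺ (d x))) = x for all x ∈ H; k(q(z₋ g)) = z 1 = k(q(z⁺ f)) for all f, g ∈ M; and k(q(add x y)) = add (k (q x)) (k (q y)) whenever d x = c y. Then the maps α : H → M × A × M, α(x) = (c x, q x, d x), and β : M × A × M → H, β(g,a,f) = add (z₋ g) (add (k a) (z⁺ f)), are mutually inverse bijections. -/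
/-!
The composite `1 ⇒ g` after `a : 1 ⇒ 1` after `f ⇒ 1` visibly has codomain `g` and domain `f`.
Since `q` is additive, fixes `a`, and sends both outer factors to the unit `e` of the endo-2-cells
of `1`, it sends the composite to `e + (a + e) = a`. Hence the triple `(g, a, f)` can be read off
the composite. Conversely, the reconstruction law for `q` says that every 2-cell is such a
composite.
-/

namespace TwoCell

variable {M H : Type*} {d c : H → M} {add : H → H → H}

section Composable

variable {x y w : H}

theorem dom_eq_cod_add (haddc : ∀ x y, d x = c y → c (add x y) = c x)
    (hxy : d x = c y) (hyw : d y = c w) : d x = c (add y w) :=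
  hxy.trans (haddc y w hyw).symm

theorem cod_add_add (haddc : ∀ x y, d x = c y → c (add x y) = c x)
    (hxy : d x = c y) (hyw : d y = c w) : c (add x (add y w)) = c x :=
  haddc _ _ (dom_eq_cod_add haddc hxy hyw)

theorem dom_add_add (haddd : ∀ x y, d x = c y → d (add x y) = d y)
    (haddc : ∀ x y, d x = c y → c (add x y) = c x)
    (hxy : d x = c y) (hyw : d y = c w) : d (add x (add y w)) = d w := by
  rw [haddd _ _ (dom_eq_cod_add haddc hxy hyw), haddd _ _ hyw]

theorem map_add_add {N : Type*} {addN : N → N → N} {φ : H → N}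
    (haddc : ∀ x y, d x = c y → c (add x y) = c x)
    (hφ : ∀ x y, d x = c y → φ (add x y) = addN (φ x) (φ y))
    (hxy : d x = c y) (hyw : d y = c w) :
    φ (add x (add y w)) = addN (φ x) (addN (φ y) (φ w)) := by
  rw [hφ _ _ (dom_eq_cod_add haddc hxy hyw), hφ _ _ hyw]

end Composable

variable [One M]

/-- The set `A` of 2-cells from `1` to `1`; its inclusion `k` into `H` is the subtype coercion. -/
abbrev EndoCell (d c : H → M) : Type _ :=
  {a : H // d a = 1 ∧ c a = 1}

/-- The map `α`, taking a 2-cell to its codomain, its part in `A`, and its domain, in this order. -/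
def components (d c : H → M) (q : H → EndoCell d c) (x : H) : M × EndoCell d c × M :=
  (c x, q x, d x)

/-- The map `β`, composing `zp f : f ⇒ 1`, `a : 1 ⇒ 1` and `zm g : 1 ⇒ g` to a 2-cell `f ⇒ g`. -/
def assemble (zm zp : M → H) (add : H → H → H) (p : M × EndoCell d c × M) : H :=
  add (zm p.1) (add p.2.1.val (zp p.2.2))

variable {zm zp : M → H}

theorem cod_assemble (haddc : ∀ x y, d x = c y → c (add x y) = c x)
    (hzpc : ∀ f, c (zp f) = 1) (hzmd : ∀ f, d (zm f) = 1) (hzmc : ∀ f, c (zm f) = f)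
    (g : M) (a : EndoCell d c) (f : M) : c (assemble zm zp add (g, a, f)) = g :=
  (cod_add_add haddc ((hzmd g).trans a.2.2.symm) (a.2.1.trans (hzpc f).symm)).trans (hzmc g)

theorem dom_assemble (haddd : ∀ x y, d x = c y → d (add x y) = d y)
    (haddc : ∀ x y, d x = c y → c (add x y) = c x)
    (hzpd : ∀ f, d (zp f) = f) (hzpc : ∀ f, c (zp f) = 1) (hzmd : ∀ f, d (zm f) = 1)
    (g : M) (a : EndoCell d c) (f : M) : d (assemble zm zp add (g, a, f)) = f :=
  (dom_add_add haddd haddc ((hzmd g).trans a.2.2.symm) (a.2.1.trans (hzpc f).symm)).trans (hzpd f)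

theorem retraction_assemble {e : H} {q : H → EndoCell d c}
    (haddc : ∀ x y, d x = c y → c (add x y) = c x)
    (hleft : ∀ a : EndoCell d c, add e a.val = a.val)
    (hright : ∀ a : EndoCell d c, add a.val e = a.val)
    (hzpc : ∀ f, c (zp f) = 1) (hzmd : ∀ f, d (zm f) = 1)
    (hqk : ∀ a : EndoCell d c, q a.val = a)
    (hqzm : ∀ g, (q (zm g)).val = e) (hqzp : ∀ f, (q (zp f)).val = e)
    (hqadd : ∀ x y, d x = c y → (q (add x y)).val = add (q x).val (q y).val)
    (g : M) (a : EndoCell d c) (f : M) : q (assemble zm zp add (g, a, f)) = a := by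
  apply Subtype.ext
  calc (q (add (zm g) (add a.val (zp f)))).val
      = add (q (zm g)).val (add (q a.val).val (q (zp f)).val) :=
        map_add_add (φ := fun x => (q x).val) haddc hqadd
          ((hzmd g).trans a.2.2.symm) (a.2.1.trans (hzpc f).symm)
    _ = add e (add a.val e) := by rw [hqzm, hqk, hqzp]
    _ = a.val := by rw [hright, hleft]

end TwoCell

open TwoCell in
theorem two_cell_structure_equiv_semibimodule_general {M H : Type*} [One M]
    (d c : H → M) (e : H) (zm zp : M → H) (add : H → H → H)
    (haddd : ∀ x y, d x = c y → d (add x y) = d y)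
    (haddc : ∀ x y, d x = c y → c (add x y) = c x)
    (hleft : ∀ a : EndoCell d c, add e a.val = a.val)
    (hright : ∀ a : EndoCell d c, add a.val e = a.val)
    (hzpd : ∀ f, d (zp f) = f) (hzpc : ∀ f, c (zp f) = 1)
    (hzmd : ∀ f, d (zm f) = 1) (hzmc : ∀ f, c (zm f) = f)
    (q : H → EndoCell d c) (hqk : ∀ a : EndoCell d c, q a.val = a)
    (hq : ∀ x, add (zm (c x)) (add (q x).val (zp (d x))) = x)
    (hqzm : ∀ g, (q (zm g)).val = e) (hqzp : ∀ f, (q (zp f)).val = e)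
    (hqadd : ∀ x y, d x = c y → (q (add x y)).val = add (q x).val (q y).val) :
    Function.LeftInverse (assemble zm zp add) (components d c q) ∧
      Function.RightInverse (assemble zm zp add) (components d c q) := by
  refine ⟨hq, fun ⟨g, a, f⟩ => Prod.ext ?codomain (Prod.ext ?endo ?domain)⟩
  case codomain => exact cod_assemble haddc hzpc hzmd hzmc g a f
  case endo => exact retraction_assemble haddc hleft hright hzpc hzmd hqk hqzm hqzp hqadd g a f
  case domain => exact dom_assemble haddd haddc hzpd hzpc hzmd g a f

/-- Given a 2-cell structure `(H, d, c, z, add)` over a monoid `M` (viewed as a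
one-object category) whose identity 2-cells split as `z f = add (zm f) (zp f)`
with `zp f : f ⇒ 1` and `zm f : 1 ⇒ f`, and given a retraction `q` of the
inclusion `k` of `A = {a : H | d a = 1 ∧ c a = 1}` satisfying the listed
compatibility conditions, the maps `α x = (c x, q x, d x)` and
`β (g, a, f) = add (zm g) (add (k a) (zp f))` are mutually inverse bijections
between `H` and `M × A × M`. -/
theorem two_cell_structure_equiv_semibimodule {M H : Type*} [Monoid M]
    (d c : H → M) (z zm zp : M → H) (add : H → H → H)
    (hzd : ∀ f, d (z f) = f) (hzc : ∀ f, c (z f) = f)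
    (haddd : ∀ x y, d x = c y → d (add x y) = d y)
    (haddc : ∀ x y, d x = c y → c (add x y) = c x)
    (hlu : ∀ x, add (z (c x)) x = x) (hru : ∀ x, add x (z (d x)) = x)
    (hassoc : ∀ x y w, d x = c y → d y = c w → add x (add y w) = add (add x y) w)
    (hzpd : ∀ f, d (zp f) = f) (hzpc : ∀ f, c (zp f) = 1)
    (hzmd : ∀ f, d (zm f) = 1) (hzmc : ∀ f, c (zm f) = f)
    (hsplit : ∀ f, z f = add (zm f) (zp f))
    (q : H → {a : H // d a = 1 ∧ c a = 1})
    (hqk : ∀ a : {a : H // d a = 1 ∧ c a = 1}, q a.val = a)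
    (hq : ∀ x : H, add (zm (c x)) (add (q x).val (zp (d x))) = x)
    (hqzm : ∀ g : M, (q (zm g)).val = z 1)
    (hqzp : ∀ f : M, (q (zp f)).val = z 1)
    (hqadd : ∀ x y : H, d x = c y → (q (add x y)).val = add (q x).val (q y).val) :
    let A := {a : H // d a = 1 ∧ c a = 1}
    let α : H → M × A × M := fun x => (c x, q x, d x)
    let β : M × A × M → H := fun p => add (zm p.1) (add p.2.1.val (zp p.2.2))
    (∀ x : H, β (α x) = x) ∧ (∀ p : M × A × M, α (β p) = p) := by
  exact two_cell_structure_equiv_semibimodule_general d c (z 1) zm zp add haddd haddc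
    (fun a => by simpa only [a.2.2] using hlu a.val)
    (fun a => by simpa only [a.2.1] using hru a.val)
    hzpd hzpc hzmd hzmc q hqk hq hqzm hqzp hqadd
end
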